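/- arXiv:2009.03379 — 8 statements merged into one kernel-verified Lean document; each statement's English description precedes it below -/
import Mathlib

section
/- For every dataset D = {(x^t,p^t)}_{t=1}^T there exists a smallest value ε* ≥ 0 such that D is ε-rationalized by quasilinear utility; moreover, for every ε ≥ ε* the dataset is ε-rationalized, so the set of values ε ≥ 0 for which D is ε-rationalized by quasilinear utility is exactly the interval [ε*, ∞). -/
/-!
Only the utility levels `v t = u (x t)` matter: the dataset is ε-rationalized iff the finite system
of linear inequalities `v s ≤ v t + p t · (x s - x t) + ε` has a solution
(`epsRationalized_iff_exists_levels`). From a solution `v`, the lower envelope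
`u y = ⨅ t, v t + p t · (y - x t) + ε` is a rationalizing utility.

The system is monotone in `ε` and invariant under adding constants to `v`. With `M` a bound for all
`|p t · (x s - x t)|`, the pair `ε = M`, `v = 0` is feasible, and any feasible `v` normalized to
vanish at one observation satisfies `|v s| ≤ M + ε`. Hence it suffices to minimize `ε` over the
feasible pairs `(ε, v)` with `0 ≤ ε ≤ M` and `|v s| ≤ 2 * M`, which form a nonempty compact set.
-/

open Finset

noncomputable section

/-- Dot product on `ℝ^K`. -/
def dot {K : ℕ} (a b : Fin K → ℝ) : ℝ := ∑ i, a i * b i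

/-- `y ∈ ℝ^K_+`. -/
def Nonneg {K : ℕ} (y : Fin K → ℝ) : Prop := ∀ i, 0 ≤ y i

/-- The utility function `u` ε-rationalizes the dataset `{(x^t, p^t)}_{t=1}^T`. -/
def Rationalizes {K T : ℕ} (x p : Fin T → Fin K → ℝ) (ε : ℝ)
    (u : (Fin K → ℝ) → ℝ) : Prop :=
  ∀ t : Fin T, ∀ y : Fin K → ℝ, Nonneg y →
    u y - dot (p t) y - ε ≤ u (x t) - dot (p t) (x t)

/-- The dataset `{(x^t, p^t)}_{t=1}^T` is ε-rationalized by quasilinear utility. -/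
def EpsRationalized {K T : ℕ} (x p : Fin T → Fin K → ℝ) (ε : ℝ) : Prop :=
  ∃ u : (Fin K → ℝ) → ℝ, Rationalizes x p ε u

/-- `ε'` is the smallest `ε ≥ 0` such that the dataset is ε-rationalized. -/
def IsEpsStar {K T : ℕ} (x p : Fin T → Fin K → ℝ) (ε' : ℝ) : Prop :=
  0 ≤ ε' ∧ EpsRationalized x p ε' ∧
    ∀ ε : ℝ, 0 ≤ ε → EpsRationalized x p ε → ε' ≤ ε

/-- Afriat-type reduction to a finite system of inequalities in the levels `v t`. -/
lemma epsRationalized_iff_exists_levels {K T : ℕ} [Nonempty (Fin T)] (x p : Fin T → Fin K → ℝ)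
    (hx : ∀ t, Nonneg (x t)) (ε : ℝ) :
    EpsRationalized x p ε ↔
      ∃ v : Fin T → ℝ, ∀ t s, v s ≤ v t + (dot (p t) (x s) - dot (p t) (x t)) + ε := by
  constructor
  · rintro ⟨u, hu⟩
    refine ⟨fun t => u (x t), fun t s => ?_⟩
    have := hu t (x s) (hx s)
    linarith
  · rintro ⟨v, hv⟩
    refine ⟨fun y => ⨅ t, (v t + (dot (p t) y - dot (p t) (x t)) + ε), fun t y _ => ?_⟩
    have h1 : (⨅ t, (v t + (dot (p t) y - dot (p t) (x t)) + ε))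
        ≤ v t + (dot (p t) y - dot (p t) (x t)) + ε :=
      ciInf_le (Set.finite_range _).bddBelow t
    have h2 : v t ≤ ⨅ r, (v r + (dot (p r) (x t) - dot (p r) (x r)) + ε) :=
      le_ciInf fun r => hv r t
    dsimp only
    linarith

lemma EpsRationalized.mono {K T : ℕ} {x p : Fin T → Fin K → ℝ} {ε ε' : ℝ} (h : ε ≤ ε')
    (hε : EpsRationalized x p ε) : EpsRationalized x p ε' := by
  obtain ⟨u, hu⟩ := hε
  refine ⟨u, fun t y hy => ?_⟩
  have := hu t y hy
  linarith

/-- The least `ε ≥ 0` making the system `v s ≤ v t + a t s + ε` solvable is attained. -/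
lemma exists_least_slack {T : ℕ} (t₀ : Fin T) (a : Fin T → Fin T → ℝ) :
    ∃ e : ℝ, 0 ≤ e ∧ (∃ v : Fin T → ℝ, ∀ t s, v s ≤ v t + a t s + e) ∧
      ∀ ε : ℝ, 0 ≤ ε → (∃ v : Fin T → ℝ, ∀ t s, v s ≤ v t + a t s + ε) → e ≤ ε := by
  obtain ⟨M, hM0, hM⟩ : ∃ M : ℝ, 0 ≤ M ∧ ∀ t s, |a t s| ≤ M := by
    refine ⟨∑ t, ∑ s, |a t s|, by positivity, fun t s => ?_⟩
    calc |a t s| ≤ ∑ s, |a t s| :=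
          Finset.single_le_sum (f := fun s => |a t s|) (fun _ _ => abs_nonneg _)
            (Finset.mem_univ s)
      _ ≤ _ := Finset.single_le_sum (f := fun t => ∑ s, |a t s|)
            (fun _ _ => Finset.sum_nonneg fun _ _ => abs_nonneg _) (Finset.mem_univ t)
  let C : Set (ℝ × (Fin T → ℝ)) :=
    (Set.Icc 0 M ×ˢ Set.Icc (fun _ => -(2 * M)) (fun _ => 2 * M)) ∩
      {q | ∀ t s, q.2 s ≤ q.2 t + a t s + q.1}
  have hC : IsCompact C := by
    refine (isCompact_Icc.prod isCompact_Icc).inter_right ?_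
    simp only [Set.ofPred_forall]
    exact isClosed_iInter fun t => isClosed_iInter fun s =>
      isClosed_le (by fun_prop) (by fun_prop)
  have hne : C.Nonempty := by
    refine ⟨(M, 0), ⟨⟨⟨hM0, le_rfl⟩, fun _ => ?_, fun _ => ?_⟩, fun t s => ?_⟩⟩
    · simp [hM0]
    · simp [hM0]
    · have := (abs_le.1 (hM t s)).1
      simp only [Pi.zero_apply]
      linarith
  obtain ⟨⟨e, v⟩, ⟨⟨he, -⟩, hv⟩, hmin⟩ := hC.exists_isMinOn hne continuous_fst.continuousOn
  refine ⟨e, he.1, ⟨v, hv⟩, fun ε hε ⟨w, hw⟩ => ?_⟩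
  rcases le_total M ε with h | h
  · exact he.2.trans h
  · -- translate `w` so that it vanishes at `t₀`; this puts it in the box
    refine hmin (show (ε, fun s => w s - w t₀) ∈ C from
      ⟨⟨⟨hε, h⟩, fun s => ?_, fun s => ?_⟩, fun t s => ?_⟩)
    · have h1 := hw s t₀
      have h2 := (abs_le.1 (hM s t₀)).2
      dsimp only
      linarith
    · have h1 := hw t₀ s
      have h2 := (abs_le.1 (hM t₀ s)).2
      dsimp only
      linarith
    · have h1 := hw t s
      dsimp only
      linarith

/-- For every dataset there is a smallest `ε* ≥ 0` rationalizing it, and the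
set of `ε ≥ 0` for which the dataset is ε-rationalized is exactly `[ε*, ∞)`. -/
theorem exists_eps_star {K T : ℕ} (x p : Fin T → Fin K → ℝ)
    (hx : ∀ t, Nonneg (x t)) (hp : ∀ t i, 0 < p t i) :
    ∃ εstar : ℝ, 0 ≤ εstar ∧ EpsRationalized x p εstar ∧
      ∀ ε : ℝ, (0 ≤ ε ∧ EpsRationalized x p ε) ↔ εstar ≤ ε := by
  obtain ⟨e, he0, he, hmin⟩ : ∃ e : ℝ, IsEpsStar x p e := by
    rcases isEmpty_or_nonempty (Fin T) with hT | hT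
    · exact ⟨0, le_rfl, ⟨0, fun t => hT.elim t⟩, fun ε hε _ => hε⟩
    · simp only [IsEpsStar, epsRationalized_iff_exists_levels x p hx]
      exact exists_least_slack hT.some fun t s => dot (p t) (x s) - dot (p t) (x t)
  exact ⟨e, he0, he, fun ε => ⟨fun h => hmin ε h.1 h.2, fun h => ⟨he0.trans h, he.mono h⟩⟩⟩
end
end

section
/- A dataset {(x^t,p^t)}_{t=1}^T is ε-rationalized by quasilinear utility if and only if there exist real numbers u^1,…,u^T satisfying, for all r,s ∈ {1,…,T}, the inequality u^s ≤ u^r + p^r·(x^s − x^r) + ε. -/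
/-!
Given Afriat numbers `u^r`, the lower envelope `U y = min_r (u^r + p^r·(y − x^r) + ε)` rationalizes
the data: the Afriat inequalities say exactly that `u^t ≤ U (x^t)`, while the `t`-th term of the
minimum gives `U y ≤ u^t + p^t·(y − x^t) + ε`. Conversely, a rationalizing utility evaluated at
the observed bundles gives Afriat numbers.
-/

open Finset

noncomputable section

lemma dot_sub {K : ℕ} (a b c : Fin K → ℝ) : dot a (b - c) = dot a b - dot a c := by
  simp [dot, mul_sub]

/-- A dataset is ε-rationalized by quasilinear utility iff there exist
numbers `u^1,…,u^T` with `u^s ≤ u^r + p^r·(x^s − x^r) + ε` for all `r,s`. -/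
theorem epsRationalized_iff_afriat_numbers {K T : ℕ} (x p : Fin T → Fin K → ℝ)
    (hx : ∀ t, Nonneg (x t)) (hp : ∀ t i, 0 < p t i) (ε : ℝ) (hε : 0 ≤ ε) :
    EpsRationalized x p ε ↔
      ∃ u : Fin T → ℝ, ∀ r s : Fin T,
        u s ≤ u r + dot (p r) (x s - x r) + ε := by
  constructor
  · rintro ⟨u, hu⟩
    refine ⟨fun t => u (x t), fun r s => ?_⟩
    have h := hu r (x s) (hx s)
    rw [dot_sub]
    linarith
  · rintro ⟨u, hu⟩
    refine ⟨fun y => ⨅ r, (u r + dot (p r) (y - x r) + ε), fun t y _ => ?_⟩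
    have : Nonempty (Fin T) := ⟨t⟩
    have h₁ : ⨅ r, (u r + dot (p r) (y - x r) + ε) ≤ u t + dot (p t) (y - x t) + ε :=
      ciInf_le (Set.finite_range _).bddBelow t
    have h₂ : u t ≤ ⨅ r, (u r + dot (p r) (x t - x r) + ε) := le_ciInf fun r => hu r t
    rw [dot_sub (p t) y (x t)] at h₁
    dsimp only
    linarith
end
end

section
/- There exist real numbers u^1,…,u^T satisfying u^s ≤ u^r + p^r·(x^s − x^r) + ε for all r,s ∈ {1,…,T} if and only if for every finite sequence {t_m}_{m=1}^M with t_m ∈ {1,…,T} and M ≥ 2, the cyclic inequality (1/M) Σ_{m=1}^M p^{t_m}·(x^{t_m} − x^{t_{m+1}}) ≤ ε holds, where indices are taken cyclically so that (x^{t_{M+1}}, p^{t_{M+1}}) = (x^{t_1}, p^{t_1}). -/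
/-!
Put `w r s = p^r · (x^s − x^r) + ε`. The cyclic inequalities say that the complete digraph on the
observations has no cycle of negative `w`-weight, and Afriat numbers are potentials for `w`,
i.e. `u s ≤ u r + w r s`. Summing the potential inequality around a cycle telescopes, which gives
one direction. Conversely, `exists_potential` takes `u s` to be the infimum of the weights of
nonempty paths from a fixed observation to `s`; closing such a path up to a cycle bounds its weight
from below, and appending an edge to a path gives the potential inequality.
-/

open Finset

noncomputable section

/-- The weight of the path `σ 0, …, σ n` extended by an edge to `s`. -/
lemma sum_update_path {ι : Type*} (w : ι → ι → ℝ) (σ : ℕ → ι) (n : ℕ) (s : ι) :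
    ∑ m ∈ Finset.range (n + 1),
        w (Function.update σ (n + 1) s m) (Function.update σ (n + 1) s (m + 1)) =
      ∑ m ∈ Finset.range n, w (σ m) (σ (m + 1)) + w (σ n) s := by
  rw [Finset.sum_range_succ]
  congr 1
  · refine Finset.sum_congr rfl fun m hm => ?_
    have hm' := Finset.mem_range.1 hm
    rw [Function.update_of_ne (by omega), Function.update_of_ne (by omega)]
  · rw [Function.update_of_ne (by omega), Function.update_self]

/-- The weights of paths with at least one edge from `a` to `s`. -/
def pathWeights {ι : Type*} (w : ι → ι → ℝ) (a s : ι) : Set ℝ :=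
  {c | ∃ n : ℕ, 1 ≤ n ∧ ∃ σ : ℕ → ι, σ 0 = a ∧ σ n = s ∧
    c = ∑ m ∈ Finset.range n, w (σ m) (σ (m + 1))}

/-- A weight without negative cycles admits a potential. Cycles with one edge need no separate
hypothesis, since traversing a loop twice is a cycle of length two. -/
lemma exists_potential {ι : Type*} (w : ι → ι → ℝ)
    (h : ∀ M : ℕ, 2 ≤ M → ∀ σ : ℕ → ι, σ M = σ 0 →
      0 ≤ ∑ m ∈ Finset.range M, w (σ m) (σ (m + 1))) :
    ∃ u : ι → ℝ, ∀ r s, u s ≤ u r + w r s := by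
  rcases isEmpty_or_nonempty ι with hι | ⟨⟨a⟩⟩
  · exact ⟨fun _ => 0, fun r => hι.elim r⟩
  have hbdd : ∀ s, BddBelow (pathWeights w a s) := by
    intro s
    refine ⟨-w s a, ?_⟩
    rintro c ⟨n, hn, σ, h0, hs, rfl⟩
    have hc := h (n + 1) (by omega) (Function.update σ (n + 1) a) (by
      rw [Function.update_self, Function.update_of_ne (by omega), h0])
    rw [sum_update_path, hs] at hc
    linarith
  have hne : ∀ s, (pathWeights w a s).Nonempty := fun s =>
    ⟨_, 1, le_rfl, fun m => if m = 0 then a else s, by simp, by simp, rfl⟩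
  refine ⟨fun s => sInf (pathWeights w a s), fun r s => ?_⟩
  rw [← sub_le_iff_le_add]
  refine le_csInf (hne r) ?_
  rintro c ⟨n, hn, σ, h0, hr, rfl⟩
  rw [sub_le_iff_le_add]
  refine csInf_le (hbdd s) ⟨n + 1, by omega, Function.update σ (n + 1) s, ?_, ?_, ?_⟩
  · rw [Function.update_of_ne (by omega), h0]
  · rw [Function.update_self]
  · rw [sum_update_path, hr]

lemma dot_sub_swap {K : ℕ} (a b c : Fin K → ℝ) : dot a (b - c) = -dot a (c - b) := by
  simp only [dot, Pi.sub_apply, ← Finset.sum_neg_distrib]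
  exact Finset.sum_congr rfl fun i _ => by ring

/-- Afriat-type numbers exist iff every cyclic sequence of observations
satisfies the averaged cyclic inequality. A cyclic sequence `t_1,…,t_M` with
`t_{M+1} = t_1` is encoded as `σ : ℕ → Fin T` with `σ M = σ 0`. -/
theorem afriat_numbers_iff_cyclic_ineq {K T : ℕ} (x p : Fin T → Fin K → ℝ)
    (hx : ∀ t, Nonneg (x t)) (hp : ∀ t i, 0 < p t i) (ε : ℝ) (hε : 0 ≤ ε) :
    (∃ u : Fin T → ℝ, ∀ r s : Fin T,
        u s ≤ u r + dot (p r) (x s - x r) + ε) ↔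
      (∀ M : ℕ, 2 ≤ M → ∀ σ : ℕ → Fin T, σ M = σ 0 →
        (1 / (M : ℝ)) *
            ∑ m ∈ Finset.range M, dot (p (σ m)) (x (σ m) - x (σ (m + 1))) ≤ ε) := by
  -- The averaged cyclic inequality is nonnegativity of the total weight of the cycle.
  have key : ∀ M : ℕ, 2 ≤ M → ∀ σ : ℕ → Fin T,
      ((1 / (M : ℝ)) *
          ∑ m ∈ Finset.range M, dot (p (σ m)) (x (σ m) - x (σ (m + 1))) ≤ ε ↔
        0 ≤ ∑ m ∈ Finset.range M, (dot (p (σ m)) (x (σ (m + 1)) - x (σ m)) + ε)) := by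
    intro M hM σ
    have hM0 : (0 : ℝ) < M := by exact_mod_cast (by omega : 0 < M)
    rw [one_div, inv_mul_le_iff₀ hM0, Finset.sum_add_distrib, Finset.sum_const,
      Finset.card_range, nsmul_eq_mul,
      Finset.sum_congr rfl fun m _ => dot_sub_swap (p (σ m)) (x (σ m)) (x (σ (m + 1))),
      Finset.sum_neg_distrib]
    constructor <;> intro h <;> linarith
  constructor
  · rintro ⟨u, hu⟩ M hM σ hσ
    rw [key M hM σ]
    calc (0 : ℝ) = ∑ m ∈ Finset.range M, (u (σ (m + 1)) - u (σ m)) := by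
          rw [Finset.sum_range_sub (fun m => u (σ m)), hσ, sub_self]
      _ ≤ _ := Finset.sum_le_sum fun m _ => by linarith [hu (σ m) (σ (m + 1))]
  · intro h
    obtain ⟨u, hu⟩ := exists_potential (fun r s => dot (p r) (x s - x r) + ε)
      fun M hM σ hσ => (key M hM σ).1 (h M hM σ hσ)
    exact ⟨u, fun r s => by linarith [hu r s]⟩
end
end

section
/- If a dataset {(x^t,p^t)}_{t=1}^T is ε-rationalized by quasilinear utility, then for every pair of observations r,s ∈ {1,…,T} the approximate law of demand holds: (1/2)(p^s − p^r)·(x^s − x^r) ≤ ε. -/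
open Finset

noncomputable section

/-- If a dataset is ε-rationalized by quasilinear utility, then the
approximate law of demand `(1/2)(p^s − p^r)·(x^s − x^r) ≤ ε` holds for all `r,s`. -/
theorem approximate_law_of_demand {K T : ℕ} (x p : Fin T → Fin K → ℝ)
    (hx : ∀ t, Nonneg (x t)) (hp : ∀ t i, 0 < p t i) (ε : ℝ) (hε : 0 ≤ ε)
    (hrat : EpsRationalized x p ε) :
    ∀ r s : Fin T, (1 / 2) * dot (p s - p r) (x s - x r) ≤ ε := by
  intro r s
  obtain ⟨u, hu⟩ := hrat
  -- Adding the optimality inequality at `s` tested on `x r` to the one at `r` tested on `x s`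
  -- cancels the utilities.
  have hs := hu s (x r) (hx r)
  have hr := hu r (x s) (hx s)
  have hdot : dot (p s - p r) (x s - x r) =
      dot (p s) (x s) - dot (p s) (x r) - dot (p r) (x s) + dot (p r) (x r) := by
    simp only [dot, ← Finset.sum_sub_distrib, ← Finset.sum_add_distrib, Pi.sub_apply]
    exact Finset.sum_congr rfl fun i _ => by ring
  linarith
end
end

section
/- For a dataset D = {(x^t,p^t)}_{t=1}^T and any counterfactual price p̃ ∈ ℝ^K_{++}, the counterfactual quantity set X(p̃,D,ε) is nonempty if and only if ε ≥ ε*(D). Moreover, when ε ≥ ε*(D), there exists a concave, strictly increasing, continuous utility function u : ℝ^K_+ → ℝ that ε-rationalizes the dataset and such that for every price p ∈ ℝ^K_{++} the map x ↦ u(x) − p·x attains an exact maximum over ℝ^K_+. -/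
/-!
If `u₀` ε-rationalizes the data, then the lower envelope of the affine functions
`y ↦ u₀ (x t) + ε + p t · (y - x t)` is at least `u₀` at the observed quantities, hence also
ε-rationalizes the data, and it is concave, continuous and strictly increasing. Taking the minimum
with the cap `y ↦ C + ∑ i, √(y i)`, where `C` is so large that the cap lies above `u₀` at every
`x t`, preserves all of this (`exists_envelope`) and makes growth sublinear, so `u - q ·` attains
its maximum at each positive price `q` (`exists_maximizer`). A maximizer at the counterfactual
price is a counterfactual quantity. Conversely a utility for the augmented data also rationalizes
the original data, and testing it on the counterfactual quantity itself gives `0 ≤ ε`.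
-/

open Finset

noncomputable section

/-- `u` is concave, strictly increasing and continuous on the nonnegative orthant. -/
structure WellBehaved {K : ℕ} (u : (Fin K → ℝ) → ℝ) : Prop where
  concave : ConcaveOn ℝ {y | Nonneg y} u
  mono : ∀ a b : Fin K → ℝ, Nonneg b → (∀ i, b i ≤ a i) → u b ≤ u a
  strict : ∀ a b : Fin K → ℝ, Nonneg b → (∀ i, b i ≤ a i) → (∃ i, b i < a i) → u b < u a
  cont : ContinuousOn u {y | Nonneg y}

theorem WellBehaved.min {K : ℕ} {u v : (Fin K → ℝ) → ℝ} (hu : WellBehaved u)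
    (hv : WellBehaved v) : WellBehaved (u ⊓ v) where
  concave := hu.concave.inf hv.concave
  mono a b hb hab := inf_le_inf (hu.mono a b hb hab) (hv.mono a b hb hab)
  strict a b hb hab h := min_lt_min (hu.strict a b hb hab h) (hv.strict a b hb hab h)
  cont := hu.cont.inf hv.cont

theorem convex_orthant (K : ℕ) : Convex ℝ {y : Fin K → ℝ | Nonneg y} := by
  intro a ha b hb s t hs ht _ i
  exact add_nonneg (mul_nonneg hs (ha i)) (mul_nonneg ht (hb i))

/-- An additively separable function with concave, strictly increasing, continuous components
inherits these properties. -/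
theorem wellBehaved_sum {K : ℕ} (c : ℝ) (f : Fin K → ℝ → ℝ)
    (hc : ∀ i, ConcaveOn ℝ (Set.Ici 0) (f i)) (hm : ∀ i, StrictMonoOn (f i) (Set.Ici 0))
    (hf : ∀ i, Continuous (f i)) : WellBehaved (fun y : Fin K → ℝ => c + ∑ i, f i (y i)) where
  concave := by
    refine ⟨convex_orthant K, ?_⟩
    intro a ha b hb s t hs ht hst
    have h := Finset.sum_le_sum (s := Finset.univ)
      fun i _ => (hc i).2 (ha i) (hb i) hs ht hst
    simp only [smul_eq_mul, Finset.sum_add_distrib, ← Finset.mul_sum] at h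
    simp only [smul_eq_mul, Pi.add_apply, Pi.smul_apply]
    have hcc : s * c + t * c = c := by rw [← add_mul, hst, one_mul]
    linarith
  mono a b hb hab := by
    have h := Finset.sum_le_sum (s := Finset.univ)
      fun i _ => (hm i).monotoneOn (hb i) ((hb i).trans (hab i)) (hab i)
    exact add_le_add_right h c
  strict a b hb hab hex := by
    obtain ⟨j, hj⟩ := hex
    have h := Finset.sum_lt_sum (s := Finset.univ)
      (fun i _ => (hm i).monotoneOn (hb i) ((hb i).trans (hab i)) (hab i))
      ⟨j, Finset.mem_univ j, hm j (hb j) ((hb j).trans (hab j)) hj⟩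
    exact add_lt_add_right h c
  cont := by
    refine Continuous.continuousOn ?_
    exact continuous_const.add (continuous_finsetSum _ fun i _ =>
      (hf i).comp (continuous_apply i))

theorem wellBehaved_affine {K : ℕ} (c : ℝ) (p : Fin K → ℝ) (hp : ∀ i, 0 < p i) :
    WellBehaved (fun y : Fin K → ℝ => c + dot p y) := by
  refine wellBehaved_sum c (fun i z => p i * z) (fun i => ⟨convex_Ici 0, ?_⟩) (fun i => ?_)
    (fun i => by fun_prop)
  · intro a _ b _ s t _ _ _
    apply le_of_eq
    simp only [smul_eq_mul]
    ring
  · intro a _ b _ hab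
    exact mul_lt_mul_of_pos_left hab (hp i)

theorem wellBehaved_sqrt (K : ℕ) (c : ℝ) :
    WellBehaved (fun y : Fin K → ℝ => c + ∑ i, √(y i)) :=
  wellBehaved_sum c (fun _ => Real.sqrt) (fun _ => Real.strictConcaveOn_sqrt.concaveOn)
    (fun _ _ ha _ _ hab => Real.sqrt_lt_sqrt ha hab) (fun _ => Real.continuous_sqrt)

/-- The pointwise minimum of `g` and finitely many `h t`, described by its universal property, so
that the empty family needs no separate treatment. -/
theorem exists_envelope {K : ℕ} {ι : Type*} (s : Finset ι) (g : (Fin K → ℝ) → ℝ)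
    (hg : WellBehaved g) (h : ι → (Fin K → ℝ) → ℝ) (hh : ∀ t, WellBehaved (h t)) :
    ∃ u, WellBehaved u ∧ (∀ y, u y ≤ g y) ∧ (∀ t ∈ s, ∀ y, u y ≤ h t y) ∧
      ∀ y v, v ≤ g y → (∀ t ∈ s, v ≤ h t y) → v ≤ u y := by
  classical
  induction s using Finset.induction_on with
  | empty => exact ⟨g, hg, fun _ => le_rfl, by simp, fun _ _ hv _ => hv⟩
  | insert t s _ ih =>
    obtain ⟨u, hu, hug, hus, hlow⟩ := ih
    refine ⟨u ⊓ h t, hu.min (hh t), fun y => inf_le_left.trans (hug y), ?_, ?_⟩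
    · intro r hr y
      rcases Finset.mem_insert.1 hr with rfl | hr
      · exact inf_le_right
      · exact inf_le_left.trans (hus r hr y)
    · intro y v hv hvs
      exact le_inf (hlow y v hv fun r hr => hvs r (Finset.mem_insert_of_mem hr))
        (hvs t (Finset.mem_insert_self t s))

theorem sqrt_le_linear {a q : ℝ} (ha : 0 ≤ a) (hq : 0 < q) : √a ≤ q * a / 2 + 1 / (2 * q) := by
  have h1 : √a ^ 2 = a := Real.sq_sqrt ha
  have h2 : q * a / 2 + 1 / (2 * q) - √a = (q * √a - 1) ^ 2 / (2 * q) := by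
    rw [← h1, Real.sqrt_sq (Real.sqrt_nonneg a)]
    field_simp
    ring
  have h3 : 0 ≤ (q * √a - 1) ^ 2 / (2 * q) := by positivity
  linarith

/-- A continuous utility below `C + ∑ i, √(y i)` has an exact maximizer at every positive price:
outside a compact box the net utility is smaller than at the origin. -/
theorem exists_maximizer {K : ℕ} (u : (Fin K → ℝ) → ℝ) (C : ℝ)
    (hcont : ContinuousOn u {y | Nonneg y}) (hle : ∀ y, u y ≤ C + ∑ i, √(y i))
    (q : Fin K → ℝ) (hq : ∀ i, 0 < q i) :
    ∃ xm : Fin K → ℝ, Nonneg xm ∧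
      ∀ y : Fin K → ℝ, Nonneg y → u y - dot q y ≤ u xm - dot q xm := by
  -- By AM-GM, `u y - q · y ≤ C + S - (q · y) / 2`, which is below `u 0` once `q · y > B`.
  set S : ℝ := ∑ i, 1 / (2 * q i) with hS
  set B : ℝ := 2 * (C + S - u 0) with hB
  have hS0 : 0 ≤ S := Finset.sum_nonneg fun i _ => by have := hq i; positivity
  have hu0 : u 0 ≤ C := by simpa using hle 0
  have hB0 : 0 ≤ B := by rw [hB]; linarith
  have hbound : ∀ y, Nonneg y → u y ≤ C + S + dot q y / 2 := by
    intro y hy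
    have h := Finset.sum_le_sum (s := Finset.univ) fun i _ => sqrt_le_linear (hy i) (hq i)
    rw [Finset.sum_add_distrib, ← Finset.sum_div] at h
    have := hle y
    unfold dot
    linarith
  have hdot : Continuous (fun y : Fin K → ℝ => dot q y) := by
    unfold dot
    fun_prop
  have hsub : Set.Icc 0 (fun i => B / q i) ⊆ {y : Fin K → ℝ | Nonneg y} :=
    fun y hy i => hy.1 i
  have h0 : (0 : Fin K → ℝ) ∈ Set.Icc 0 (fun i => B / q i) :=
    ⟨le_rfl, fun i => div_nonneg hB0 (hq i).le⟩
  obtain ⟨xm, hxm, hmax⟩ := isCompact_Icc.exists_isMaxOn ⟨0, h0⟩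
    ((hcont.sub hdot.continuousOn).mono hsub)
  refine ⟨xm, hsub hxm, fun y hy => ?_⟩
  by_cases hyB : y ∈ Set.Icc 0 (fun i => B / q i)
  · exact hmax hyB
  · have hz : u 0 - dot q 0 ≤ u xm - dot q xm := hmax h0
    have hd0 : dot q 0 = 0 := by simp [dot]
    have hex : ∃ i, B / q i < y i := by
      by_contra! hcon
      exact hyB ⟨hy, hcon⟩
    obtain ⟨i, hi⟩ := hex
    rw [div_lt_iff₀ (hq i)] at hi
    have hle' : q i * y i ≤ dot q y :=
      Finset.single_le_sum (f := fun i => q i * y i)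
        (fun j _ => mul_nonneg (hq j).le (hy j)) (Finset.mem_univ i)
    have := hbound y hy
    linarith

/-- An ε-rationalizable dataset is ε-rationalized by a well-behaved utility that has an exact
maximizer at every positive price. -/
theorem exists_good_utility {K T : ℕ} (x p : Fin T → Fin K → ℝ)
    (hx : ∀ t, Nonneg (x t)) (hp : ∀ t i, 0 < p t i) (ε : ℝ) (h : EpsRationalized x p ε) :
    ∃ u : (Fin K → ℝ) → ℝ, WellBehaved u ∧ Rationalizes x p ε u ∧
      ∀ q : Fin K → ℝ, (∀ i, 0 < q i) → ∃ xm : Fin K → ℝ, Nonneg xm ∧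
        ∀ y : Fin K → ℝ, Nonneg y → u y - dot q y ≤ u xm - dot q xm := by
  obtain ⟨w, hw⟩ := h
  set C : ℝ := ∑ t, |w (x t)|
  obtain ⟨u, hu, hug, huh, hlow⟩ := exists_envelope Finset.univ _ (wellBehaved_sqrt K C)
    (fun t y => (w (x t) + ε - dot (p t) (x t)) + dot (p t) y)
    (fun t => wellBehaved_affine _ (p t) (hp t))
  refine ⟨u, hu, ?_, fun q hq => exists_maximizer u C hu.cont hug q hq⟩
  intro t y _
  have h1 := huh t (Finset.mem_univ t) y
  have h2 : w (x t) ≤ u (x t) := by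
    refine hlow _ _ ?_ fun s _ => ?_
    · have h3 : |w (x t)| ≤ C :=
        Finset.single_le_sum (f := fun t => |w (x t)|) (fun _ _ => abs_nonneg _)
          (Finset.mem_univ t)
      have h4 : 0 ≤ ∑ i, √(x t i) := Finset.sum_nonneg fun i _ => Real.sqrt_nonneg _
      linarith [le_abs_self (w (x t))]
    · linarith [hw s (x t) (hx t)]
  linarith

/-- The counterfactual quantity set `X(p̃,D,ε)` is nonempty iff `ε ≥ ε*(D)`;
moreover, when `ε ≥ ε*(D)` there is a concave, strictly increasing, continuous utility
function that ε-rationalizes the dataset and has an exact maximizer at every positive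
price. -/
theorem counterfactual_quantities_nonempty {K T : ℕ} (x p : Fin T → Fin K → ℝ)
    (hx : ∀ t, Nonneg (x t)) (hp : ∀ t i, 0 < p t i)
    (εstar : ℝ) (hstar : IsEpsStar x p εstar)
    (pt : Fin K → ℝ) (hpt : ∀ i, 0 < pt i) (ε : ℝ) :
    ((∃ xt : Fin K → ℝ, Nonneg xt ∧
        EpsRationalized (Fin.cons xt x) (Fin.cons pt p) ε) ↔ εstar ≤ ε) ∧
    (εstar ≤ ε → ∃ u : (Fin K → ℝ) → ℝ,
      ConcaveOn ℝ {y | Nonneg y} u ∧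
      (∀ a b : Fin K → ℝ, Nonneg b → (∀ i, b i ≤ a i) → u b ≤ u a) ∧
      (∀ a b : Fin K → ℝ, Nonneg b → (∀ i, b i ≤ a i) → (∃ i, b i < a i) → u b < u a) ∧
      ContinuousOn u {y | Nonneg y} ∧
      Rationalizes x p ε u ∧
      ∀ q : Fin K → ℝ, (∀ i, 0 < q i) → ∃ xm : Fin K → ℝ, Nonneg xm ∧
        ∀ y : Fin K → ℝ, Nonneg y → u y - dot q y ≤ u xm - dot q xm) := by
  have key : εstar ≤ ε → EpsRationalized x p ε := by
    intro h
    obtain ⟨-, ⟨w, hw⟩, -⟩ := hstar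
    exact ⟨w, fun t y hy => by linarith [hw t y hy]⟩
  refine ⟨⟨?_, fun h => ?_⟩, fun h => ?_⟩
  · rintro ⟨xt, hxt, w, hw⟩
    refine hstar.2.2 ε ?_ ⟨w, fun t y hy => ?_⟩
    · have := hw 0 xt hxt
      simp only [Fin.cons_zero] at this
      linarith
    · simpa using hw t.succ y hy
  · obtain ⟨u, -, hr, hmax⟩ := exists_good_utility x p hx hp ε (key h)
    obtain ⟨xt, hxt, hm⟩ := hmax pt hpt
    refine ⟨xt, hxt, u, fun t y hy => ?_⟩
    refine Fin.cases ?_ (fun s => ?_) t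
    · simp only [Fin.cons_zero]
      linarith [hm y hy, hstar.1]
    · simpa using hr s y hy
  · obtain ⟨u, hu, hr, hmax⟩ := exists_good_utility x p hx hp ε (key h)
    exact ⟨u, hu.concave, hu.mono, hu.strict, hu.cont, hr, hmax⟩
end
end

section
/- Suppose K = 1 (a single good). For a dataset D = {(x^t,p^t)}_{t=1}^T and ε ≥ ε*(D), the counterfactual demand bounds x̄(p̃,ε) = sup{x̃ : x̃ ∈ X(p̃,D,ε)} and x̲(p̃,ε) = inf{x̃ : x̃ ∈ X(p̃,D,ε)} each satisfy the law of demand in the counterfactual price: for any p̃^1, p̃^0 ∈ ℝ_{++}, (x̄(p̃^1,ε) − x̄(p̃^0,ε))(p̃^1 − p̃^0) ≤ 0 and (x̲(p̃^1,ε) − x̲(p̃^0,ε))(p̃^1 − p̃^0) ≤ 0. -/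
/-!
Let `x̃` be a counterfactual demand at price `p̃`, rationalized by `u`, and let `p̃'` be another
price. Call a quantity `z` on the right side if `(p̃ - p̃') (z - x̃) ≥ 0`. Any `z` on the wrong side
is ε-dominated by `x̃` at `p̃`, hence also at `p̃'`. So if `y` maximizes `u z - p̃' z` over the finitely
many right-side quantities among the data and `x̃`, then `y` is ε-optimal at `p̃'` among all these
points: it is better than those on the right side, and at least as good as `x̃`, which is ε-better
than those on the wrong side. Since only finitely many quantities matter for ε-rationalizability
(`epsRationalized1_of_finite`), `y` is a counterfactual demand at `p̃'` (`exists_mem_Xset1`).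
Hence lowering the price pushes every counterfactual demand weakly up to another one, and raising
it pushes every one weakly down, which orders the suprema and the infima.
-/

open Finset

noncomputable section

/-- The utility function `u` ε-rationalizes a single-good dataset `{(x^t, p^t)}_{t=1}^T`. -/
def Rationalizes1 {T : ℕ} (x p : Fin T → ℝ) (ε : ℝ) (u : ℝ → ℝ) : Prop :=
  ∀ t : Fin T, ∀ y : ℝ, 0 ≤ y → u y - p t * y - ε ≤ u (x t) - p t * x t

/-- A single-good dataset is ε-rationalized by quasilinear utility. -/
def EpsRationalized1 {T : ℕ} (x p : Fin T → ℝ) (ε : ℝ) : Prop :=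
  ∃ u : ℝ → ℝ, Rationalizes1 x p ε u

/-- `ε'` is the smallest `ε ≥ 0` such that the single-good dataset is ε-rationalized. -/
def IsEpsStar1 {T : ℕ} (x p : Fin T → ℝ) (ε' : ℝ) : Prop :=
  0 ≤ ε' ∧ EpsRationalized1 x p ε' ∧
    ∀ ε : ℝ, 0 ≤ ε → EpsRationalized1 x p ε → ε' ≤ ε

/-- The counterfactual quantity set `X(p̃,D,ε)` for a single good. -/
def Xset1 {T : ℕ} (x p : Fin T → ℝ) (pt : ℝ) (ε : ℝ) : Set ℝ :=
  {xt | 0 ≤ xt ∧ EpsRationalized1 (Fin.cons xt x) (Fin.cons pt p) ε}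

/-- Only the observed quantities matter: utilities satisfying the ε-optimality inequalities
between observations extend to all of `ℝ_+`, by giving unobserved quantities a very low utility. -/
lemma epsRationalized1_of_finite {T : ℕ} (x p : Fin T → ℝ) (hp : ∀ t, 0 < p t) (ε : ℝ)
    (u : ℝ → ℝ) (h : ∀ t s, u (x s) - p t * x s - ε ≤ u (x t) - p t * x t) :
    EpsRationalized1 x p ε := by
  classical
  obtain ⟨m, hm⟩ := (Set.finite_range fun t => u (x t) - p t * x t).bddBelow
  refine ⟨fun y => if y ∈ Set.range x then u y else m + ε, fun t y hy => ?_⟩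
  simp only [Set.mem_range_self, if_true]
  split_ifs with hyx
  · obtain ⟨s, rfl⟩ := hyx
    exact h t s
  · have h1 : m ≤ u (x t) - p t * x t := hm ⟨t, rfl⟩
    have h2 := mul_nonneg (hp t).le hy
    linarith

/-- A counterfactual demand at price `pt` is matched by one at price `pt'` lying weakly on the
side of it that the law of demand prescribes. -/
lemma exists_mem_Xset1 {T : ℕ} (x p : Fin T → ℝ) (hx : ∀ t, 0 ≤ x t) (hp : ∀ t, 0 < p t)
    (ε : ℝ) (hε : 0 ≤ ε) (pt pt' : ℝ) (hpt' : 0 < pt') (xt : ℝ) (hxt : xt ∈ Xset1 x p pt ε) :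
    ∃ y ∈ Xset1 x p pt' ε, 0 ≤ (pt - pt') * (y - xt) := by
  classical
  obtain ⟨hxt0, u, hu⟩ := hxt
  have hu0 : ∀ y, 0 ≤ y → u y - pt * y - ε ≤ u xt - pt * xt := by
    simpa using hu 0
  have huS : ∀ t y, 0 ≤ y → u y - p t * y - ε ≤ u (x t) - p t * x t := fun t => by
    simpa using hu t.succ
  set S : Finset ℝ :=
    (insert xt (univ.image x)).filter fun z => 0 ≤ (pt - pt') * (z - xt) with hS
  have hxtS : xt ∈ S := by simp [hS]
  obtain ⟨y, hyS, hmax⟩ := S.exists_max_image (fun z => u z - pt' * z) ⟨xt, hxtS⟩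
  have hy : 0 ≤ y := by
    have := (Finset.mem_filter.1 hyS).1
    simp only [Finset.mem_insert, Finset.mem_image, Finset.mem_univ, true_and] at this
    obtain rfl | ⟨s, rfl⟩ := this
    exacts [hxt0, hx s]
  refine ⟨y, ⟨hy, ?_⟩, (Finset.mem_filter.1 hyS).2⟩
  -- Data points on the wrong side of `xt` were already ε-dominated by `xt` at price `pt`,
  -- and moving to `pt'` only makes them less attractive relative to `xt`.
  have key : ∀ s, u (x s) - pt' * x s - ε ≤ u y - pt' * y := by
    intro s
    by_cases hs : 0 ≤ (pt - pt') * (x s - xt)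
    · have := hmax (x s) (by simp [hS, hs])
      linarith
    · have h1 := hmax xt hxtS
      have h2 := hu0 (x s) (hx s)
      linarith
  refine epsRationalized1_of_finite _ _ ?_ ε u ?_
  · exact Fin.cases (by simpa using hpt') (fun t => by simpa using hp t)
  · refine Fin.cases (Fin.cases (by simpa using hε) fun s => by simpa using key s) fun t =>
      Fin.cases (by simpa using huS t y hy) fun s => by simpa using huS t (x s) (hx s)

/-- Law of demand for both bounds, for a strict price decrease from `pt` to `pt'`. -/
lemma bounds_le_of_lt {T : ℕ} (x p : Fin T → ℝ) (hx : ∀ t, 0 ≤ x t) (hp : ∀ t, 0 < p t)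
    (ε : ℝ) (hε : 0 ≤ ε) (pt pt' : ℝ) (hpt' : 0 < pt') (hlt : pt' < pt) :
    (BddAbove (Xset1 x p pt' ε) → sSup (Xset1 x p pt ε) ≤ sSup (Xset1 x p pt' ε)) ∧
      sInf (Xset1 x p pt ε) ≤ sInf (Xset1 x p pt' ε) := by
  have up : ∀ a ∈ Xset1 x p pt ε, ∃ b ∈ Xset1 x p pt' ε, a ≤ b := fun a ha => by
    obtain ⟨b, hb, h⟩ := exists_mem_Xset1 x p hx hp ε hε pt pt' hpt' a ha
    exact ⟨b, hb, sub_nonneg.1 (nonneg_of_mul_nonneg_right h (sub_pos.2 hlt))⟩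
  have down : ∀ a ∈ Xset1 x p pt' ε, ∃ b ∈ Xset1 x p pt ε, b ≤ a := fun a ha => by
    obtain ⟨b, hb, h⟩ := exists_mem_Xset1 x p hx hp ε hε pt' pt (hpt'.trans hlt) a ha
    refine ⟨b, hb, le_of_not_gt fun hab => ?_⟩
    nlinarith [mul_pos (sub_pos.2 hlt) (sub_pos.2 hab)]
  -- The two sets are empty simultaneously, so the junk values of `sSup` and `sInf` agree.
  rcases (Xset1 x p pt ε).eq_empty_or_nonempty with he | hne
  · have he' : Xset1 x p pt' ε = ∅ := Set.eq_empty_of_forall_notMem fun a ha => by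
      obtain ⟨b, hb, -⟩ := down a ha
      simp [he] at hb
    simp [he, he']
  · have hne' : (Xset1 x p pt' ε).Nonempty := by
      obtain ⟨a, ha⟩ := hne
      obtain ⟨b, hb, -⟩ := up a ha
      exact ⟨b, hb⟩
    refine ⟨fun hB => csSup_le hne fun a ha => ?_, le_csInf hne' fun a ha => ?_⟩
    · obtain ⟨b, hb, hab⟩ := up a ha
      exact hab.trans (le_csSup hB hb)
    · obtain ⟨b, hb, hab⟩ := down a ha
      exact (csInf_le ⟨0, fun z hz => hz.1⟩ hb).trans hab

/-- With a single good and `ε ≥ ε*(D)`, the upper and lower counterfactual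
demand bounds each satisfy the law of demand in the counterfactual price. -/
theorem univariate_monotonicity {T : ℕ} (x p : Fin T → ℝ)
    (hx : ∀ t, 0 ≤ x t) (hp : ∀ t, 0 < p t)
    (εstar : ℝ) (hstar : IsEpsStar1 x p εstar) (ε : ℝ) (hε : εstar ≤ ε)
    (pt1 pt0 : ℝ) (h1 : 0 < pt1) (h0 : 0 < pt0) :
    (BddAbove (Xset1 x p pt1 ε) → BddAbove (Xset1 x p pt0 ε) →
      (sSup (Xset1 x p pt1 ε) - sSup (Xset1 x p pt0 ε)) * (pt1 - pt0) ≤ 0) ∧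
    (sInf (Xset1 x p pt1 ε) - sInf (Xset1 x p pt0 ε)) * (pt1 - pt0) ≤ 0 := by
  have hε0 : 0 ≤ ε := hstar.1.trans hε
  rcases lt_trichotomy pt1 pt0 with h | rfl | h
  · obtain ⟨hs, hi⟩ := bounds_le_of_lt x p hx hp ε hε0 pt0 pt1 h1 h
    exact ⟨fun hB _ => mul_nonpos_of_nonneg_of_nonpos (sub_nonneg.2 (hs hB)) (sub_neg.2 h).le,
      mul_nonpos_of_nonneg_of_nonpos (sub_nonneg.2 hi) (sub_neg.2 h).le⟩
  · simp
  · obtain ⟨hs, hi⟩ := bounds_le_of_lt x p hx hp ε hε0 pt1 pt0 h0 h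
    exact ⟨fun _ hB => mul_nonpos_of_nonpos_of_nonneg (sub_nonpos.2 (hs hB)) (sub_pos.2 h).le,
      mul_nonpos_of_nonpos_of_nonneg (sub_nonpos.2 hi) (sub_pos.2 h).le⟩
end
end

section
/- Fix prices p^1,…,p^T ∈ ℝ^K_{++}. The map sending a tuple of quantities d = (d^1,…,d^T) ∈ ℝ^{K×T}_+ to ε*({(d^t,p^t)}_{t=1}^T), the smallest ε ≥ 0 such that the dataset {(d^t,p^t)}_{t=1}^T is ε-rationalized by quasilinear utility, is a convex and continuous function of d. -/
/-!
A dataset is `ε`-rationalized exactly when there are numbers `U_t` with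
`U_s - U_t ≤ p^t · (d^s - d^t) + ε` for all `s, t` (`epsRationalized_iff`): take `U_t = u(d^t)` in one
direction and `u(y) = min_t (U_t + p^t · (y - d^t) + ε)` in the other. With prices fixed these
inequalities are jointly linear in `(d, U, ε)`, so convex combinations of feasible triples are
feasible, and minimizing over `(U, ε)` yields a convex function of `d`. Moving `d` to `e` changes
each `p^t · (d^s - d^t)` by at most a constant times `dist d e` (`costGap_le_add`), which can be
absorbed by `ε`; hence `ε*` is Lipschitz.
-/

open Finset

noncomputable section

/-- With the prices `p` fixed, `ε*` as a function of the quantities `d`: the smallest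
`ε ≥ 0` such that `{(d^t, p^t)}_{t=1}^T` is ε-rationalized by quasilinear utility. -/
def epsStarF {K T : ℕ} (p : Fin T → Fin K → ℝ) (d : Fin T → Fin K → ℝ) : ℝ :=
  sInf {ε : ℝ | 0 ≤ ε ∧ EpsRationalized d p ε}

/-- `p^t · (d^s - d^t)`: the extra cost, at the prices of observation `t`, of the bundle of
observation `s` over the bundle of observation `t`. -/
def costGap {K T : ℕ} (p d : Fin T → Fin K → ℝ) (s t : Fin T) : ℝ :=
  ∑ i, p t i * (d s i - d t i)

/-- `ε` is feasible for the Afriat-type inequalities `U_s - U_t ≤ p^t · (d^s - d^t) + ε`. -/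
def AfriatFeasible {K T : ℕ} (p d : Fin T → Fin K → ℝ) (ε : ℝ) : Prop :=
  ∃ U : Fin T → ℝ, ∀ s t, U s - U t ≤ costGap p d s t + ε

theorem dot_sub_dot {K T : ℕ} (p d : Fin T → Fin K → ℝ) (s t : Fin T) :
    dot (p t) (d s) - dot (p t) (d t) = costGap p d s t := by
  simp only [dot, costGap, mul_sub, Finset.sum_sub_distrib]

/-- Two observations of the same bundle may carry different numbers `U_t`: the lower envelope of affine
functions built here only needs `u (d t) ≥ U t`. -/
theorem epsRationalized_iff {K T : ℕ} (p d : Fin T → Fin K → ℝ) (hd : ∀ t, Nonneg (d t))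
    (ε : ℝ) : EpsRationalized d p ε ↔ AfriatFeasible p d ε := by
  constructor
  · rintro ⟨u, hu⟩
    refine ⟨fun t => u (d t), fun s t => ?_⟩
    have h := hu t (d s) (hd s)
    have h' := dot_sub_dot p d s t
    dsimp only
    linarith
  · rintro ⟨U, hU⟩
    rcases isEmpty_or_nonempty (Fin T) with hT | hT
    · exact ⟨fun _ => 0, fun t => hT.elim t⟩
    refine ⟨fun y => Finset.univ.inf' Finset.univ_nonempty
      (fun t => U t + (dot (p t) y - dot (p t) (d t)) + ε), fun t y _ => ?_⟩
    have h1 : Finset.univ.inf' Finset.univ_nonempty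
        (fun r => U r + (dot (p r) y - dot (p r) (d r)) + ε)
        ≤ U t + (dot (p t) y - dot (p t) (d t)) + ε :=
      Finset.inf'_le (fun r => U r + (dot (p r) y - dot (p r) (d r)) + ε) (Finset.mem_univ t)
    have h2 : U t ≤ Finset.univ.inf' Finset.univ_nonempty
        (fun r => U r + (dot (p r) (d t) - dot (p r) (d r)) + ε) := by
      refine Finset.le_inf' _ _ fun r _ => ?_
      have h := hU t r
      rw [dot_sub_dot]
      linarith
    dsimp only
    linarith

theorem epsStarF_le {K T : ℕ} (p d : Fin T → Fin K → ℝ) (hd : ∀ t, Nonneg (d t)) {ε : ℝ}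
    (h0 : 0 ≤ ε) (h : AfriatFeasible p d ε) : epsStarF p d ≤ ε :=
  csInf_le ⟨0, fun _ hx => hx.1⟩ ⟨h0, (epsRationalized_iff p d hd ε).2 h⟩

/-- Some `ε` is feasible (take `U = 0` and `ε` large), so `ε*` is an infimum over a nonempty set
and can be approximated by feasible values. -/
theorem exists_feasible_lt {K T : ℕ} (p d : Fin T → Fin K → ℝ) (hd : ∀ t, Nonneg (d t)) {η : ℝ}
    (hη : 0 < η) : ∃ ε, 0 ≤ ε ∧ AfriatFeasible p d ε ∧ ε < epsStarF p d + η := by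
  have hne : {ε : ℝ | 0 ≤ ε ∧ EpsRationalized d p ε}.Nonempty := by
    refine ⟨∑ s, ∑ t, |costGap p d s t|, by positivity,
      (epsRationalized_iff p d hd _).2 ⟨fun _ => 0, fun s t => ?_⟩⟩
    have h1 : |costGap p d s t| ≤ ∑ t, |costGap p d s t| :=
      Finset.single_le_sum (f := fun t => |costGap p d s t|)
        (fun _ _ => abs_nonneg _) (Finset.mem_univ t)
    have h2 : ∑ t, |costGap p d s t| ≤ ∑ s, ∑ t, |costGap p d s t| :=
      Finset.single_le_sum (f := fun s => ∑ t, |costGap p d s t|)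
        (fun _ _ => by positivity) (Finset.mem_univ s)
    have h3 := neg_abs_le (costGap p d s t)
    linarith
  obtain ⟨ε, ⟨h0, h⟩, hlt⟩ := exists_lt_of_csInf_lt hne (lt_add_of_pos_right _ hη)
  exact ⟨ε, h0, (epsRationalized_iff p d hd ε).1 h, hlt⟩

theorem costGap_combo {K T : ℕ} (p d e : Fin T → Fin K → ℝ) (a b : ℝ) (s t : Fin T) :
    costGap p (a • d + b • e) s t = a * costGap p d s t + b * costGap p e s t := by
  simp only [costGap, Finset.mul_sum, ← Finset.sum_add_distrib, Pi.add_apply, Pi.smul_apply,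
    smul_eq_mul]
  exact Finset.sum_congr rfl fun i _ => by ring

theorem costGap_le_add {K T : ℕ} (p d e : Fin T → Fin K → ℝ) (s t : Fin T) :
    costGap p e s t ≤ costGap p d s t + (∑ t, ∑ i, |p t i|) * 2 * dist d e := by
  have hle : ∀ r i, |e r i - d r i| ≤ dist d e := fun r i => by
    rw [← Real.dist_eq, dist_comm]
    exact (dist_le_pi_dist (d r) (e r) i).trans (dist_le_pi_dist d e r)
  have h1 : costGap p e s t - costGap p d s t ≤ ∑ i, |p t i| * (2 * dist d e) := by
    rw [costGap, costGap, ← Finset.sum_sub_distrib]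
    refine Finset.sum_le_sum fun i _ => ?_
    have h : |(e s i - d s i) - (e t i - d t i)| ≤ 2 * dist d e := by
      have := abs_sub (e s i - d s i) (e t i - d t i)
      linarith [hle s i, hle t i]
    calc p t i * (e s i - e t i) - p t i * (d s i - d t i)
        = p t i * ((e s i - d s i) - (e t i - d t i)) := by ring
      _ ≤ |p t i| * |(e s i - d s i) - (e t i - d t i)| := by
        rw [← abs_mul]; exact le_abs_self _
      _ ≤ |p t i| * (2 * dist d e) := by gcongr
  have h2 : ∑ i, |p t i| ≤ ∑ t, ∑ i, |p t i| :=
    Finset.single_le_sum (f := fun t => ∑ i, |p t i|)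
      (fun _ _ => by positivity) (Finset.mem_univ t)
  rw [← Finset.sum_mul] at h1
  have h3 := mul_le_mul_of_nonneg_right h2 (by positivity : 0 ≤ 2 * dist d e)
  linarith

/-- With prices fixed, the map `d ↦ ε*({(d^t,p^t)})` is convex and
continuous on the set of nonnegative quantity tuples. -/
theorem epsStar_convex_continuous {K T : ℕ} (p : Fin T → Fin K → ℝ)
    (hp : ∀ t i, 0 < p t i) :
    ConvexOn ℝ {d : Fin T → Fin K → ℝ | ∀ t, Nonneg (d t)} (epsStarF p) ∧
    ContinuousOn (epsStarF p) {d : Fin T → Fin K → ℝ | ∀ t, Nonneg (d t)} := by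
  refine ⟨⟨?_, ?_⟩, ?_⟩
  · intro d hd e he a b ha hb _ t i
    have h1 := mul_nonneg ha (hd t i)
    have h2 := mul_nonneg hb (he t i)
    simp only [Pi.add_apply, Pi.smul_apply, smul_eq_mul]
    linarith
  · intro d hd e he a b ha hb hab
    have hc : ∀ t, Nonneg ((a • d + b • e) t) := fun t i => by
      have h1 := mul_nonneg ha (hd t i)
      have h2 := mul_nonneg hb (he t i)
      simp only [Pi.add_apply, Pi.smul_apply, smul_eq_mul]
      linarith
    refine le_of_forall_pos_le_add fun η hη => ?_
    obtain ⟨ε₁, h₁, ⟨U, hU⟩, hlt₁⟩ := exists_feasible_lt p d hd hη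
    obtain ⟨ε₂, h₂, ⟨V, hV⟩, hlt₂⟩ := exists_feasible_lt p e he hη
    have key : epsStarF p (a • d + b • e) ≤ a * ε₁ + b * ε₂ := by
      refine epsStarF_le p _ hc (by positivity) ⟨fun t => a * U t + b * V t, fun s t => ?_⟩
      rw [costGap_combo]
      have h3 := mul_le_mul_of_nonneg_left (hU s t) ha
      have h4 := mul_le_mul_of_nonneg_left (hV s t) hb
      dsimp only
      linarith
    have h3 := mul_le_mul_of_nonneg_left hlt₁.le ha
    have h4 := mul_le_mul_of_nonneg_left hlt₂.le hb
    have h5 : a * η + b * η = η := by rw [← add_mul, hab, one_mul]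
    simp only [smul_eq_mul]
    linarith
  · have hC : 0 ≤ (∑ t, ∑ i, |p t i|) * 2 := by positivity
    refine (LipschitzOnWith.of_le_add_mul (K := NNReal.mk _ hC) fun e he d hd => ?_).continuousOn
    refine le_of_forall_pos_le_add fun η hη => ?_
    obtain ⟨ε, h0, ⟨U, hU⟩, hlt⟩ := exists_feasible_lt p d hd hη
    have key : epsStarF p e ≤ ε + (∑ t, ∑ i, |p t i|) * 2 * dist d e := by
      refine epsStarF_le p e he (by positivity) ⟨U, fun s t => ?_⟩
      have h := costGap_le_add p e d s t
      rw [dist_comm] at h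
      linarith [hU s t]
    rw [dist_comm e d, NNReal.coe_mk]
    linarith
end
end

section
/- Let u : ℝ^K_+ → ℝ be concave, monotonically increasing, and continuous, and suppose its indirect utility V_u(p) = sup_{x ∈ ℝ^K_+}(u(x) − p·x) is finite for all p in some open set O ⊆ ℝ^K. Then for every price p in the relative interior of the convex hull of O, the function x ↦ u(x) − p·x attains a maximum over x ∈ ℝ^K_+. -/
/-!
The prices at which the indirect utility is finite form a convex set, so it is finite on the
convex hull of `O`, which is open. Given a price `p` in the hull, the price `p - δ • 1` is also in
the hull for some small `δ > 0`. Finiteness there reads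
`u y - p·y ≤ B - δ ∑ i, y i` for all `y ≥ 0`, so outside a large box the objective falls below its
value at `0`. The continuous objective therefore attains its global maximum on that compact box.
-/


open Finset

noncomputable section

theorem dot_comb {K : ℕ} (a b : ℝ) (p q y : Fin K → ℝ) :
    dot (a • p + b • q) y = a * dot p y + b * dot q y := by
  simp only [dot, Pi.add_apply, Pi.smul_apply, smul_eq_mul, Finset.mul_sum,
    ← Finset.sum_add_distrib]
  exact Finset.sum_congr rfl fun i _ => by ring

/-- Indirect utility is a supremum of functions affine in the price, hence its domain of
finiteness is convex. -/
theorem convex_finite_indirect_utility {K : ℕ} (u : (Fin K → ℝ) → ℝ) :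
    Convex ℝ {p : Fin K → ℝ |
      BddAbove {v : ℝ | ∃ y : Fin K → ℝ, Nonneg y ∧ v = u y - dot p y}} := by
  rintro p ⟨B, hB⟩ q ⟨C, hC⟩ a b ha hb hab
  refine ⟨a * B + b * C, ?_⟩
  rintro v ⟨y, hy, rfl⟩
  have h1 := mul_le_mul_of_nonneg_left (hB ⟨y, hy, rfl⟩) ha
  have h2 := mul_le_mul_of_nonneg_left (hC ⟨y, hy, rfl⟩) hb
  have h3 : u y = a * u y + b * u y := by rw [← add_mul, hab, one_mul]
  rw [dot_comb]
  linarith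

/-- If `u` is concave, monotonically increasing, and continuous on `ℝ^K_+`,
and its indirect utility is finite on an open set `O`, then for every price in the
relative interior of the convex hull of `O`, `x ↦ u(x) − p·x` attains a maximum on
`ℝ^K_+`. -/
theorem exists_maximizer_of_finite_indirect_utility {K : ℕ}
    (u : (Fin K → ℝ) → ℝ)
    (hconc : ConcaveOn ℝ {y : Fin K → ℝ | Nonneg y} u)
    (hmono : ∀ a b : Fin K → ℝ, Nonneg b → (∀ i, b i ≤ a i) → u b ≤ u a)
    (hcont : ContinuousOn u {y : Fin K → ℝ | Nonneg y})
    (O : Set (Fin K → ℝ)) (hO : IsOpen O)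
    (hfin : ∀ pp ∈ O, BddAbove {v : ℝ | ∃ y : Fin K → ℝ, Nonneg y ∧ v = u y - dot pp y}) :
    ∀ pp ∈ intrinsicInterior ℝ (convexHull ℝ O),
      ∃ xm : Fin K → ℝ, Nonneg xm ∧
        ∀ y : Fin K → ℝ, Nonneg y → u y - dot pp y ≤ u xm - dot pp xm := by
  intro p hp
  have hpC : p ∈ convexHull ℝ O := intrinsicInterior_subset hp
  have hsub := convexHull_min (s := O) hfin (convex_finite_indirect_utility u)
  obtain ⟨δ, hδ, hδC⟩ : ∃ δ : ℝ, 0 < δ ∧ (1 : ℝ) • p + (-δ) • (1 : Fin K → ℝ) ∈ convexHull ℝ O := by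
    have hc : Continuous fun δ : ℝ => (1 : ℝ) • p + (-δ) • (1 : Fin K → ℝ) := by fun_prop
    have hev : ∀ᶠ δ in nhds (0 : ℝ),
        (1 : ℝ) • p + (-δ) • (1 : Fin K → ℝ) ∈ convexHull ℝ O :=
      hc.continuousAt.eventually_mem (hO.convexHull.mem_nhds (by simpa using hpC))
    obtain ⟨ε, hε, h⟩ := Metric.eventually_nhds_iff.mp hev
    refine ⟨ε / 2, by positivity, h ?_⟩
    rw [Real.dist_eq, sub_zero, abs_of_pos (by positivity)]
    linarith
  obtain ⟨B, hB⟩ := hsub hδC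
  have hbound : ∀ y : Fin K → ℝ, Nonneg y → u y - dot p y ≤ B - δ * ∑ i, y i := by
    intro y hy
    have h := hB ⟨y, hy, rfl⟩
    have h1 : dot (1 : Fin K → ℝ) y = ∑ i, y i := by simp [dot]
    rw [dot_comb, h1] at h
    linarith
  have h0 : Nonneg (0 : Fin K → ℝ) := fun _ => le_rfl
  have hd0 : dot p 0 = 0 := by simp [dot]
  have hB0 : u 0 ≤ B := by simpa [hd0] using hbound 0 h0
  -- Outside the box of side `M`, the bound on the objective is below its value `u 0` at `0`.
  set M : ℝ := (B - u 0) / δ with hM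
  have hM0 : 0 ≤ M := div_nonneg (by linarith) hδ.le
  have hMδ : δ * M = B - u 0 := by rw [hM]; field_simp
  have hbox : (0 : Fin K → ℝ) ∈ Set.Icc (0 : Fin K → ℝ) (fun _ => M) := ⟨le_rfl, fun _ => hM0⟩
  have hcontf : ContinuousOn (fun y => u y - dot p y) (Set.Icc (0 : Fin K → ℝ) (fun _ => M)) := by
    refine (hcont.mono fun y hy => hy.1).sub (Continuous.continuousOn ?_)
    unfold dot
    fun_prop
  obtain ⟨x, hx, hmax⟩ := isCompact_Icc.exists_isMaxOn ⟨0, hbox⟩ hcontf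
  refine ⟨x, hx.1, fun y hy => ?_⟩
  by_cases hyM : ∀ i, y i ≤ M
  · exact hmax (show y ∈ Set.Icc (0 : Fin K → ℝ) (fun _ => M) from ⟨hy, hyM⟩)
  · push Not at hyM
    obtain ⟨i, hi⟩ := hyM
    have hsum : y i ≤ ∑ j, y j :=
      Finset.single_le_sum (fun j _ => hy j) (Finset.mem_univ i)
    have h1 : δ * M ≤ δ * ∑ j, y j := mul_le_mul_of_nonneg_left (hi.le.trans hsum) hδ.le
    have h2 : u 0 - dot p 0 ≤ u x - dot p x := hmax hbox
    have h3 := hbound y hy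
    rw [hd0] at h2
    linarith
end
end
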